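/- Let G be a group with finite generating set and word metric, admitting a homological connecting vector (k₀,…,k_m) of length m, and set k := max(k₀,…,k_m). Then for every nonzero character χ : G → ℝ the following are equivalent: (1) χ ∈ Σ^m(G;ℤ); (2) there exists a chain endomorphism of ℤG-complexes (φ_q)_{q=0,…,m} on (C_q^k(G))_{q=0,…,m} extending the identity on ℤ with v_χ(φ_q(c)) − v_χ(c) > 0 for every nonzero c ∈ C_q^k(G) and every q = 0,…,m. -/

import Mathlib

open Finsupp

variable {G : Type*} [Group G]

/-- Word length with respect to a generating set `X`. -/
noncomputable def wordLength (X : Finset G) (g : G) : ℕ :=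
  sInf {n : ℕ | ∃ w : List G, w.length = n ∧ (∀ x ∈ w, x ∈ X ∨ x⁻¹ ∈ X) ∧ w.prod = g}

/-- The left-invariant word metric `d(g,h) = l(g⁻¹h)`. -/
noncomputable def wordDist (X : Finset G) (g h : G) : ℕ :=
  wordLength X (g⁻¹ * h)

/-- `c` is a chain in `C_q^k(S)`: its support consists of `(q+1)`-tuples of elements of `S`
that are pairwise at distance at most `k`. -/
def VRChain (X : Finset G) (S : Set G) (q k : ℕ) (c : (Fin (q + 1) → G) →₀ ℤ) : Prop :=
  ∀ σ ∈ c.support, (∀ i, σ i ∈ S) ∧ ∀ i j, wordDist X (σ i) (σ j) ≤ k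

/-- The simplicial boundary map `∂_{q+1} : ℤ[G^{q+2}] → ℤ[G^{q+1}]`. -/
noncomputable def bnd (q : ℕ) :
    ((Fin (q + 2) → G) →₀ ℤ) →ₗ[ℤ] ((Fin (q + 1) → G) →₀ ℤ) :=
  Finsupp.lift _ ℤ _
    (fun σ => ∑ i : Fin (q + 2), ((-1 : ℤ) ^ (i : ℕ)) • Finsupp.single (σ ∘ i.succAbove) (1 : ℤ))

/-- The augmentation `ε : ℤ[G] → ℤ` sending every vertex to `1`. -/
noncomputable def aug : ((Fin 1 → G) →₀ ℤ) →ₗ[ℤ] ℤ :=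
  Finsupp.lift ℤ ℤ (Fin 1 → G) (fun _ => (1 : ℤ))

/-- Reduced `q`-cycles at scale `k` on `S` bound at scale `l` on `S`. -/
def BoundsAt (X : Finset G) (S : Set G) : ℕ → ℕ → ℕ → Prop
  | 0, k, l => ∀ z : (Fin 1 → G) →₀ ℤ, VRChain X S 0 k z → aug z = 0 →
      ∃ c : (Fin 2 → G) →₀ ℤ, VRChain X S 1 l c ∧ bnd 0 c = z
  | (q + 1), k, l => ∀ z : (Fin (q + 2) → G) →₀ ℤ, VRChain X S (q + 1) k z → bnd q z = 0 →
      ∃ c : (Fin (q + 3) → G) →₀ ℤ, VRChain X S (q + 2) l c ∧ bnd (q + 1) c = z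

/-- `S ⊆ G` is of type `FP_m`. -/
def TypeFP (X : Finset G) (S : Set G) (m : ℕ) : Prop :=
  ∀ q < m, ∀ k : ℕ, ∃ l ≥ k, BoundsAt X S q k l

/-- A character on `G` is a homomorphism to the additive reals. -/
def IsCharacter (χ : G → ℝ) : Prop :=
  ∀ g h : G, χ (g * h) = χ g + χ h

/-- Simultaneous left translation on chains, making `ℤ[G^{q+1}]` a `ℤG`-module. -/
noncomputable def lTranslate (g : G) (q : ℕ) :
    ((Fin (q + 1) → G) →₀ ℤ) →ₗ[ℤ] ((Fin (q + 1) → G) →₀ ℤ) :=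
  Finsupp.lmapDomain ℤ ℤ (fun σ i => g * σ i)

/-- A chain endomorphism of `ℤG`-complexes on `(C_q^k(G))_{q=0,…,m}` extending the identity
on `ℤ`: each `φ q` maps scale-`k` chains to scale-`k` chains, is `G`-equivariant,
satisfies `ε ∘ φ₀ = ε` and commutes with the boundary maps. -/
def IsChainEndo (X : Finset G) (k m : ℕ)
    (φ : ∀ q : ℕ, ((Fin (q + 1) → G) →₀ ℤ) →ₗ[ℤ] ((Fin (q + 1) → G) →₀ ℤ)) : Prop :=
  (∀ q ≤ m, ∀ c, VRChain X Set.univ q k c → VRChain X Set.univ q k (φ q c)) ∧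
  (∀ q ≤ m, ∀ (g : G) (c), VRChain X Set.univ q k c →
    φ q (lTranslate g q c) = lTranslate g q (φ q c)) ∧
  (∀ c : (Fin 1 → G) →₀ ℤ, VRChain X Set.univ 0 k c → aug (φ 0 c) = aug c) ∧
  (∀ q : ℕ, q + 1 ≤ m → ∀ c : (Fin (q + 2) → G) →₀ ℤ, VRChain X Set.univ (q + 1) k c →
    bnd q (φ (q + 1) c) = φ q (bnd q c))

/-- The valuation of a simplex: `v(σ) = min_i χ(g_i)` (with values in `EReal`). -/
noncomputable def vsimp (χ : G → ℝ) {q : ℕ} (σ : Fin (q + 1) → G) : EReal :=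
  ⨅ i, (χ (σ i) : EReal)

/-- The valuation of a chain: the minimum of the valuations of the simplices in its support
(`⊤` for the zero chain). -/
noncomputable def vchain (χ : G → ℝ) {q : ℕ} (c : (Fin (q + 1) → G) →₀ ℤ) : EReal :=
  ⨅ σ ∈ c.support, vsimp χ σ

set_option linter.unusedSectionVars false

/-- Integral chains on `n`-tuples, i.e. the augmented bar complex of `G` graded by the number of
vertices. -/
abbrev Chain (G : Type*) (n : ℕ) := (Fin n → G) →₀ ℤ

/-- The boundary map of the augmented bar complex. -/
noncomputable def face (n : ℕ) : Chain G (n + 1) →ₗ[ℤ] Chain G n :=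
  Finsupp.lift _ ℤ _
    (fun σ => ∑ i : Fin (n + 1), ((-1 : ℤ) ^ (i : ℕ)) • Finsupp.single (σ ∘ i.succAbove) (1 : ℤ))

/-- Left translation of chains. -/
noncomputable def leftTranslate (g : G) (n : ℕ) : Chain G n →ₗ[ℤ] Chain G n :=
  Finsupp.lmapDomain ℤ ℤ (fun σ i => g * σ i)

/-- Right translation of chains. -/
noncomputable def rightTranslate (t : G) (n : ℕ) : Chain G n →ₗ[ℤ] Chain G n :=
  Finsupp.lmapDomain ℤ ℤ (fun σ i => σ i * t)

/-- The cone over a chain with a given apex. -/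
noncomputable def cone (g : G) (n : ℕ) : Chain G n →ₗ[ℤ] Chain G (n + 1) :=
  Finsupp.lmapDomain ℤ ℤ (fun σ => (Fin.cons g σ : Fin (n + 1) → G))

/-- Chains all of whose vertices lie in `S`. -/
def chainsOn (S : Set G) (n : ℕ) : Submodule ℤ (Chain G n) :=
  Finsupp.supported ℤ ℤ {σ | ∀ i, σ i ∈ S}

/-- Chains on simplices of diameter at most `k`. -/
noncomputable def chainsAt (X : Finset G) (k n : ℕ) : Submodule ℤ (Chain G n) :=
  Finsupp.supported ℤ ℤ {σ | ∀ i j, wordDist X (σ i) (σ j) ≤ k}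

/-- The superlevel set of a character. -/
def superlevel (χ : G → ℝ) (r : ℝ) : Set G := {g | r ≤ χ g}

lemma face_single (n : ℕ) (σ : Fin (n + 1) → G) :
    face n (single σ 1) =
      ∑ i : Fin (n + 1), ((-1 : ℤ) ^ (i : ℕ)) • Finsupp.single (σ ∘ i.succAbove) (1 : ℤ) := by
  simp [face]

lemma leftTranslate_single (g : G) (n : ℕ) (σ : Fin n → G) (a : ℤ) :
    leftTranslate g n (single σ a) = single (fun i => g * σ i) a := by
  simp [leftTranslate]

lemma rightTranslate_single (g : G) (n : ℕ) (σ : Fin n → G) (a : ℤ) :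
    rightTranslate g n (single σ a) = single (fun i => σ i * g) a := by
  simp [rightTranslate]

lemma cone_single (g : G) (n : ℕ) (σ : Fin n → G) (a : ℤ) :
    cone g n (single σ a) = single (Fin.cons g σ) a := by
  simp [cone]

/-- A linear map sends chains supported on `A` into `Q` as soon as it does so on simplices. -/
lemma map_mem_of_supported {α M : Type*} [AddCommGroup M] (F : (α →₀ ℤ) →ₗ[ℤ] M)
    (A : Set α) (Q : Submodule ℤ M) (h : ∀ σ ∈ A, F (single σ 1) ∈ Q) :
    ∀ c ∈ Finsupp.supported ℤ ℤ A, F c ∈ Q := by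
  intro c hc
  rw [Finsupp.supported_eq_span_single] at hc
  have : Submodule.span ℤ ((fun i => single i (1 : ℤ)) '' A) ≤ Q.comap F := by
    rw [Submodule.span_le]
    rintro _ ⟨σ, hσ, rfl⟩
    exact h σ hσ
  exact this hc

lemma map_eq_of_supported {α M : Type*} [AddCommGroup M] (F F' : (α →₀ ℤ) →ₗ[ℤ] M)
    (A : Set α) (h : ∀ σ ∈ A, F (single σ 1) = F' (single σ 1)) :
    ∀ c ∈ Finsupp.supported ℤ ℤ A, F c = F' c := by
  intro c hc
  have := map_mem_of_supported (F - F') A ⊥ (fun σ hσ => by simp [h σ hσ]) c hc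
  simpa [sub_eq_zero] using this

lemma single_mem_chainsOn {S : Set G} {n : ℕ} {σ : Fin n → G} (h : ∀ i, σ i ∈ S) (a : ℤ) :
    single σ a ∈ chainsOn S n :=
  Finsupp.single_mem_supported _ _ h

lemma single_mem_chainsAt {X : Finset G} {k n : ℕ} {σ : Fin n → G}
    (h : ∀ i j, wordDist X (σ i) (σ j) ≤ k) (a : ℤ) : single σ a ∈ chainsAt X k n :=
  Finsupp.single_mem_supported _ _ h

lemma chainsOn_mono {S T : Set G} (h : S ⊆ T) (n : ℕ) : chainsOn S n ≤ chainsOn T n :=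
  Finsupp.supported_mono fun _ hσ i => h (hσ i)

lemma chainsAt_mono (X : Finset G) {k l : ℕ} (h : k ≤ l) (n : ℕ) :
    chainsAt X k n ≤ chainsAt X l n :=
  Finsupp.supported_mono fun _ hσ i j => (hσ i j).trans h

lemma superlevel_anti (χ : G → ℝ) {r s : ℝ} (h : r ≤ s) : superlevel χ s ⊆ superlevel χ r :=
  fun _ hg => h.trans hg

lemma face_cone (g : G) (n : ℕ) (c : Chain G (n + 1)) :
    face (n + 1) (cone g (n + 1) c) = c - cone g n (face n c) := by
  have : face (n + 1) ∘ₗ cone g (n + 1) = LinearMap.id - cone g n ∘ₗ face n := by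
    ext σ : 2
    simp only [LinearMap.comp_apply, Finsupp.lsingle_apply, LinearMap.sub_apply,
      LinearMap.id_apply, cone_single, face_single, map_sum, map_smul]
    rw [Fin.sum_univ_succ, sub_eq_add_neg, ← Finset.sum_neg_distrib]
    congr 1
    · simp only [Fin.val_zero, pow_zero, one_smul]
      congr 1
    · refine Finset.sum_congr rfl fun i _ => ?_
      rw [Fin.val_succ, pow_succ, mul_neg_one, neg_smul]
      congr 3
      funext j
      refine Fin.cases ?_ (fun j => ?_) j <;> simp
  exact LinearMap.congr_fun this c

lemma face_zero_cone (g : G) (c : Chain G 0) : face 0 (cone g 0 c) = c := by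
  have : face 0 ∘ₗ cone g 0 = LinearMap.id := by
    ext σ : 2
    simp only [LinearMap.comp_apply, Finsupp.lsingle_apply, LinearMap.id_apply, cone_single,
      face_single]
    simp [Subsingleton.elim _ σ]
  exact LinearMap.congr_fun this c

lemma single_eq_cone {n : ℕ} (σ : Fin (n + 1) → G) (a : ℤ) :
    single σ a = cone (σ 0) n (single (Fin.tail σ) a) := by
  rw [cone_single, Fin.cons_self_tail]

lemma face_face (n : ℕ) (c : Chain G (n + 2)) : face n (face (n + 1) c) = 0 := by
  suffices h : face n ∘ₗ face (n + 1) = (0 : Chain G (n + 2) →ₗ[ℤ] Chain G n) from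
    LinearMap.congr_fun h c
  clear c
  induction n with
  | zero =>
    ext σ : 2
    simp only [LinearMap.comp_apply, Finsupp.lsingle_apply]
    rw [single_eq_cone, face_cone, map_sub, face_zero_cone, sub_self]
    rfl
  | succ n ih =>
    ext σ : 2
    simp only [LinearMap.comp_apply, Finsupp.lsingle_apply]
    rw [single_eq_cone, face_cone, map_sub, face_cone]
    have := LinearMap.congr_fun ih (single (Fin.tail σ) 1)
    simp only [LinearMap.comp_apply, LinearMap.zero_apply] at this
    simp [this]

lemma face_leftTranslate (g : G) (n : ℕ) (c : Chain G (n + 1)) :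
    face n (leftTranslate g (n + 1) c) = leftTranslate g n (face n c) := by
  have : face n ∘ₗ leftTranslate g (n + 1) = leftTranslate g n ∘ₗ face n := by
    ext σ : 2
    simp only [LinearMap.comp_apply, Finsupp.lsingle_apply, leftTranslate_single, face_single,
      map_sum, map_smul]
    rfl
  exact LinearMap.congr_fun this c

lemma face_rightTranslate (t : G) (n : ℕ) (c : Chain G (n + 1)) :
    face n (rightTranslate t (n + 1) c) = rightTranslate t n (face n c) := by
  have : face n ∘ₗ rightTranslate t (n + 1) = rightTranslate t n ∘ₗ face n := by
    ext σ : 2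
    simp only [LinearMap.comp_apply, Finsupp.lsingle_apply, rightTranslate_single, face_single,
      map_sum, map_smul]
    rfl
  exact LinearMap.congr_fun this c

lemma cone_leftTranslate (g a : G) (n : ℕ) (c : Chain G n) :
    cone (g * a) n (leftTranslate g n c) = leftTranslate g (n + 1) (cone a n c) := by
  have : cone (g * a) n ∘ₗ leftTranslate g n = leftTranslate g (n + 1) ∘ₗ cone a n := by
    ext σ : 2
    simp only [LinearMap.comp_apply, Finsupp.lsingle_apply, leftTranslate_single, cone_single]
    congr 1
    funext j
    refine Fin.cases ?_ (fun j => ?_) j <;> simp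
  exact LinearMap.congr_fun this c

lemma leftTranslate_leftTranslate (g h : G) (n : ℕ) (c : Chain G n) :
    leftTranslate g n (leftTranslate h n c) = leftTranslate (g * h) n c := by
  have : leftTranslate g n ∘ₗ leftTranslate h n = leftTranslate (g * h) n := by
    ext σ : 2
    simp only [LinearMap.comp_apply, Finsupp.lsingle_apply, leftTranslate_single, mul_assoc]
  exact LinearMap.congr_fun this c

lemma leftTranslate_one (n : ℕ) (c : Chain G n) : leftTranslate 1 n c = c := by
  have : leftTranslate (1 : G) n = LinearMap.id := by
    ext σ : 2
    simp [leftTranslate_single]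
  exact LinearMap.congr_fun this c

lemma rightTranslate_leftTranslate (t g : G) (n : ℕ) (c : Chain G n) :
    rightTranslate t n (leftTranslate g n c) = leftTranslate g n (rightTranslate t n c) := by
  have : rightTranslate t n ∘ₗ leftTranslate g n = leftTranslate g n ∘ₗ rightTranslate t n := by
    ext σ : 2
    simp only [LinearMap.comp_apply, Finsupp.lsingle_apply, leftTranslate_single,
      rightTranslate_single, mul_assoc]
  exact LinearMap.congr_fun this c

lemma rightTranslate_zero (t : G) : rightTranslate t 0 = LinearMap.id := by
  ext σ : 2
  simp only [LinearMap.comp_apply, Finsupp.lsingle_apply, LinearMap.id_apply,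
    rightTranslate_single]
  congr 1
  exact Subsingleton.elim _ _

lemma wordDist_mul_left (X : Finset G) (a g h : G) :
    wordDist X (a * g) (a * h) = wordDist X g h := by
  simp [wordDist, mul_assoc]

lemma wordDist_self (X : Finset G) (g : G) : wordDist X g g = 0 := by
  simp only [wordDist, inv_mul_cancel, wordLength]
  exact Nat.sInf_eq_zero.2 (Or.inl ⟨[], by simp⟩)

lemma face_mem_chainsAt {X : Finset G} {k n : ℕ} {c : Chain G (n + 1)}
    (hc : c ∈ chainsAt X k (n + 1)) : face n c ∈ chainsAt X k n := by
  refine map_mem_of_supported _ _ _ (fun σ hσ => ?_) c hc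
  rw [face_single]
  exact Submodule.sum_mem _ fun i _ => Submodule.smul_mem _ _
    (single_mem_chainsAt (fun _ _ => hσ _ _) _)

lemma face_mem_chainsOn {S : Set G} {n : ℕ} {c : Chain G (n + 1)}
    (hc : c ∈ chainsOn S (n + 1)) : face n c ∈ chainsOn S n := by
  refine map_mem_of_supported _ _ _ (fun σ hσ => ?_) c hc
  rw [face_single]
  exact Submodule.sum_mem _ fun i _ => Submodule.smul_mem _ _
    (single_mem_chainsOn (fun _ => hσ _) _)

lemma leftTranslate_mem_chainsAt {X : Finset G} {k n : ℕ} (g : G) {c : Chain G n}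
    (hc : c ∈ chainsAt X k n) : leftTranslate g n c ∈ chainsAt X k n := by
  refine map_mem_of_supported _ _ _ (fun σ hσ => ?_) c hc
  rw [leftTranslate_single]
  exact single_mem_chainsAt (fun i j => by rw [wordDist_mul_left]; exact hσ i j) _

lemma leftTranslate_mem_chainsOn {χ : G → ℝ} (hχ : IsCharacter χ) {r : ℝ} {n : ℕ} (g : G)
    {c : Chain G n} (hc : c ∈ chainsOn (superlevel χ r) n) :
    leftTranslate g n c ∈ chainsOn (superlevel χ (χ g + r)) n := by
  refine map_mem_of_supported _ _ _ (fun σ hσ => ?_) c hc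
  rw [leftTranslate_single]
  refine single_mem_chainsOn (fun i => ?_) _
  have : r ≤ χ (σ i) := hσ i
  change _ ≤ χ _
  rw [hχ]
  linarith

lemma rightTranslate_mem_chainsOn {χ : G → ℝ} (hχ : IsCharacter χ) {r : ℝ} {n : ℕ} (t : G)
    {c : Chain G n} (hc : c ∈ chainsOn (superlevel χ r) n) :
    rightTranslate t n c ∈ chainsOn (superlevel χ (r + χ t)) n := by
  refine map_mem_of_supported _ _ _ (fun σ hσ => ?_) c hc
  rw [rightTranslate_single]
  refine single_mem_chainsOn (fun i => ?_) _
  have : r ≤ χ (σ i) := hσ i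
  change _ ≤ χ _
  rw [hχ]
  linarith

lemma cone_mem_chainsOn {S : Set G} {n : ℕ} {g : G} (hg : g ∈ S) {c : Chain G n}
    (hc : c ∈ chainsOn S n) : cone g n c ∈ chainsOn S (n + 1) := by
  refine map_mem_of_supported _ _ _ (fun σ hσ => ?_) c hc
  rw [cone_single]
  exact single_mem_chainsOn (fun i => by refine Fin.cases ?_ (fun j => ?_) i <;> simp [hg, hσ _]) _

/-- The cone homotopy between two chain maps. -/
noncomputable def coneHomotopy (f f' : ∀ n, Chain G n →ₗ[ℤ] Chain G n) :
    ∀ n, Chain G n →ₗ[ℤ] Chain G (n + 1)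
  | 0 => 0
  | n + 1 => Finsupp.lift _ ℤ _ (fun σ => cone (σ 0) (n + 1)
      (f (n + 1) (single σ 1) - f' (n + 1) (single σ 1) -
        coneHomotopy f f' n (face n (single σ 1))))

lemma coneHomotopy_single (f f' : ∀ n, Chain G n →ₗ[ℤ] Chain G n) (n : ℕ)
    (σ : Fin (n + 1) → G) :
    coneHomotopy f f' (n + 1) (single σ 1) = cone (σ 0) (n + 1)
      (f (n + 1) (single σ 1) - f' (n + 1) (single σ 1) -
        coneHomotopy f f' n (face n (single σ 1))) := by
  simp [coneHomotopy]

lemma coneHomotopy_mem_chainsOn {f f' : ∀ n, Chain G n →ₗ[ℤ] Chain G n} {S : Set G}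
    (hf : ∀ n, ∀ c ∈ chainsOn S n, f n c ∈ chainsOn S n)
    (hf' : ∀ n, ∀ c ∈ chainsOn S n, f' n c ∈ chainsOn S n) (n : ℕ) :
    ∀ c ∈ chainsOn S n, coneHomotopy f f' n c ∈ chainsOn S (n + 1) := by
  induction n with
  | zero => intro c _; exact Submodule.zero_mem _
  | succ n ih =>
    refine map_mem_of_supported _ _ _ (fun σ hσ => ?_)
    rw [coneHomotopy_single]
    have h1 := single_mem_chainsOn hσ 1
    exact cone_mem_chainsOn (hσ 0) (Submodule.sub_mem _
      (Submodule.sub_mem _ (hf _ _ h1) (hf' _ _ h1)) (ih _ (face_mem_chainsOn h1)))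

lemma coneHomotopy_leftTranslate {X : Finset G} {k N : ℕ} {f f' : ∀ n, Chain G n →ₗ[ℤ] Chain G n}
    (hf : ∀ n ≤ N, ∀ (g : G), ∀ c ∈ chainsAt X k (n + 1),
      f (n + 1) (leftTranslate g _ c) = leftTranslate g _ (f (n + 1) c))
    (hf' : ∀ n ≤ N, ∀ (g : G), ∀ c ∈ chainsAt X k (n + 1),
      f' (n + 1) (leftTranslate g _ c) = leftTranslate g _ (f' (n + 1) c))
    (n : ℕ) (hn : n ≤ N + 1) (g : G) :
    ∀ c ∈ chainsAt X k n, coneHomotopy f f' n (leftTranslate g _ c) =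
      leftTranslate g _ (coneHomotopy f f' n c) := by
  induction n with
  | zero => intro c _; simp [coneHomotopy]
  | succ n ih =>
    refine map_eq_of_supported (coneHomotopy f f' (n + 1) ∘ₗ leftTranslate g _)
      (leftTranslate g _ ∘ₗ coneHomotopy f f' (n + 1)) _ (fun σ hσ => ?_)
    have h1 := single_mem_chainsAt hσ 1
    have h2 := leftTranslate_single g _ σ 1
    simp only [LinearMap.comp_apply]
    rw [coneHomotopy_single, h2, coneHomotopy_single, ← cone_leftTranslate, ← h2,
      hf n (by lia) _ _ h1, hf' n (by lia) _ _ h1, face_leftTranslate,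
      ih (by lia) _ (face_mem_chainsAt h1)]
    simp only [map_sub]

lemma face_coneHomotopy {X : Finset G} {k N : ℕ} {f f' : ∀ n, Chain G n →ₗ[ℤ] Chain G n}
    (h0 : f 0 = f' 0)
    (hf : ∀ n ≤ N, ∀ c ∈ chainsAt X k (n + 1), face n (f (n + 1) c) = f n (face n c))
    (hf' : ∀ n ≤ N, ∀ c ∈ chainsAt X k (n + 1), face n (f' (n + 1) c) = f' n (face n c))
    (n : ℕ) (hn : n ≤ N) :
    ∀ c ∈ chainsAt X k (n + 1),
      face (n + 1) (coneHomotopy f f' (n + 1) c) =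
        f (n + 1) c - f' (n + 1) c - coneHomotopy f f' n (face n c) := by
  induction n with
  | zero =>
    refine map_eq_of_supported (face 1 ∘ₗ coneHomotopy f f' 1)
      (f 1 - f' 1 - coneHomotopy f f' 0 ∘ₗ face 0) _ (fun σ hσ => ?_)
    have h1 := single_mem_chainsAt hσ 1
    simp only [LinearMap.comp_apply, LinearMap.sub_apply]
    rw [coneHomotopy_single, face_cone]
    simp only [map_sub, hf 0 hn _ h1, hf' 0 hn _ h1, h0]
    simp [coneHomotopy]
  | succ n ih =>
    refine map_eq_of_supported (face (n + 2) ∘ₗ coneHomotopy f f' (n + 2))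
      (f (n + 2) - f' (n + 2) - coneHomotopy f f' (n + 1) ∘ₗ face (n + 1)) _ (fun σ hσ => ?_)
    have h1 := single_mem_chainsAt hσ 1
    simp only [LinearMap.comp_apply, LinearMap.sub_apply]
    rw [coneHomotopy_single, face_cone]
    have h2 : face (n + 1) (f (n + 2) (single σ 1) - f' (n + 2) (single σ 1) -
        coneHomotopy f f' (n + 1) (face (n + 1) (single σ 1))) = 0 := by
      rw [map_sub, map_sub, hf _ hn _ h1, hf' _ hn _ h1,
        ih (by lia) _ (face_mem_chainsAt h1), face_face]
      simp
    rw [h2, map_zero, sub_zero]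

lemma exists_le_character {χ : G → ℝ} (hχ : IsCharacter χ) (hne : ∃ g, χ g ≠ 0) (D : ℝ) :
    ∃ t, D ≤ χ t := by
  have h1 : χ 1 = 0 := by simpa using hχ 1 1
  obtain ⟨a, ha⟩ : ∃ a, 0 < χ a := by
    obtain ⟨g, hg⟩ := hne
    rcases lt_or_gt_of_ne hg with h | h
    · refine ⟨g⁻¹, ?_⟩
      have := hχ g g⁻¹
      rw [mul_inv_cancel, h1] at this
      linarith
    · exact ⟨g, h⟩
  have hpow : ∀ n : ℕ, χ (a ^ n) = n * χ a := by
    intro n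
    induction n with
    | zero => simp [h1]
    | succ n ih => rw [pow_succ, hχ, ih]; push_cast; ring
  obtain ⟨n, hn⟩ := exists_nat_ge (D / χ a)
  exact ⟨a ^ n, by rw [hpow]; exact (div_le_iff₀ ha).1 hn⟩

lemma exists_word {X : Finset G} (hX : Subgroup.closure (X : Set G) = ⊤) (g : G) :
    ∃ w : List G, (∀ x ∈ w, x ∈ X ∨ x⁻¹ ∈ X) ∧ w.prod = g := by
  have hg : g ∈ Subgroup.closure (X : Set G) := by rw [hX]; trivial
  rw [← Subgroup.mem_toSubmonoid, Subgroup.closure_toSubmonoid] at hg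
  obtain ⟨w, hw, hp⟩ := Submonoid.exists_list_of_mem_closure hg
  exact ⟨w, fun x hx => by simpa using hw x hx, hp⟩

lemma finite_ball {X : Finset G} (hX : Subgroup.closure (X : Set G) = ⊤) (k : ℕ) :
    {g : G | wordLength X g ≤ k}.Finite := by
  let A := {x : G // x ∈ X ∨ x⁻¹ ∈ X}
  have hA : Finite A := by
    have : ({x : G | x ∈ X ∨ x⁻¹ ∈ X}).Finite :=
      (X.finite_toSet).union ((X.finite_toSet).preimage inv_injective.injOn)
    exact this
  refine ((List.finite_length_le A k).image (fun w => (w.map Subtype.val).prod)).subset ?_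
  intro g hg
  have hne : {n : ℕ | ∃ w : List G, w.length = n ∧ (∀ x ∈ w, x ∈ X ∨ x⁻¹ ∈ X) ∧
      w.prod = g}.Nonempty := by
    obtain ⟨w, hw, hp⟩ := exists_word hX g
    exact ⟨_, w, rfl, hw, hp⟩
  obtain ⟨w, hl, hw, hp⟩ := Nat.sInf_mem hne
  refine ⟨w.attachWith _ hw, ?_, ?_⟩
  · change (w.attachWith _ hw).length ≤ k
    rw [List.length_attachWith, hl]
    exact hg
  · simp [hp]

/-- There are finitely many simplices of bounded diameter with first vertex `1`. -/
lemma finite_based_simplices {X : Finset G} (hX : Subgroup.closure (X : Set G) = ⊤) (k n : ℕ) :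
    {σ : Fin (n + 1) → G | σ 0 = 1 ∧ ∀ i j, wordDist X (σ i) (σ j) ≤ k}.Finite := by
  refine (Set.Finite.pi' fun _ : Fin (n + 1) => finite_ball hX k).subset ?_
  rintro σ ⟨h0, h⟩ i
  have := h 0 i
  rwa [h0, wordDist, inv_one, one_mul] at this

/-- The translate of a simplex with first vertex `1`. -/
def based {n : ℕ} (σ : Fin (n + 1) → G) : Fin (n + 1) → G := fun i => (σ 0)⁻¹ * σ i

lemma leftTranslate_single_based {n : ℕ} (σ : Fin (n + 1) → G) :
    leftTranslate (σ 0) _ (single (based σ) 1) = single σ 1 := by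
  simp [leftTranslate_single, based]

lemma based_mul {n : ℕ} (g : G) (σ : Fin (n + 1) → G) :
    based (fun i => g * σ i) = based σ := by
  funext i
  simp [based, mul_assoc]

lemma based_mem {X : Finset G} {k n : ℕ} {σ : Fin (n + 1) → G}
    (hσ : ∀ i j, wordDist X (σ i) (σ j) ≤ k) :
    based σ ∈ {σ : Fin (n + 1) → G | σ 0 = 1 ∧ ∀ i j, wordDist X (σ i) (σ j) ≤ k} :=
  ⟨by simp [based], fun i j => by simpa [based, wordDist_mul_left] using hσ i j⟩

lemma exists_mem_chainsAt (X : Finset G) {n : ℕ} (c : Chain G n) : ∃ L, c ∈ chainsAt X L n := by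
  refine ⟨c.support.sup fun σ => Finset.univ.sup fun p : Fin n × Fin n =>
    wordDist X (σ p.1) (σ p.2), fun σ hσ i j => ?_⟩
  refine le_trans ?_ (Finset.le_sup (f := fun σ : Fin n → G =>
    Finset.univ.sup fun p : Fin n × Fin n => wordDist X (σ p.1) (σ p.2)) hσ)
  exact Finset.le_sup (f := fun p : Fin n × Fin n => wordDist X (σ p.1) (σ p.2))
    (Finset.mem_univ (i, j))

lemma exists_mem_chainsOn (χ : G → ℝ) {n : ℕ} (c : Chain G n) :
    ∃ D : ℝ, c ∈ chainsOn (superlevel χ (-D)) n := by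
  have hfin : ((fun p : (Fin n → G) × Fin n => -χ (p.1 p.2)) ''
      ((c.support : Set (Fin n → G)) ×ˢ Set.univ)).Finite :=
    (c.support.finite_toSet.prod Set.finite_univ).image _
  obtain ⟨D, hD⟩ := hfin.bddAbove
  refine ⟨D, fun σ hσ i => ?_⟩
  have : -χ (σ i) ≤ D := hD ⟨(σ, i), ⟨hσ, trivial⟩, rfl⟩
  change -D ≤ χ (σ i)
  linarith

/-- An equivariant map distorts scales and valuations by a bounded amount. -/
lemma exists_bound {X : Finset G} (hX : Subgroup.closure (X : Set G) = ⊤) {χ : G → ℝ}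
    (hχ : IsCharacter χ) {n q k : ℕ} (F : Chain G (n + 1) →ₗ[ℤ] Chain G q)
    (hF : ∀ (g : G), ∀ c ∈ chainsAt X k (n + 1),
      F (leftTranslate g _ c) = leftTranslate g _ (F c)) :
    ∃ (L : ℕ) (D : ℝ), (∀ c ∈ chainsAt X k (n + 1), F c ∈ chainsAt X L q) ∧
      ∀ r, ∀ c ∈ chainsAt X k (n + 1), c ∈ chainsOn (superlevel χ r) (n + 1) →
        F c ∈ chainsOn (superlevel χ (r - D)) q := by
  choose Lf hLf using fun σ => exists_mem_chainsAt X (F (single σ 1))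
  choose Df hDf using fun σ => exists_mem_chainsOn χ (F (single σ 1))
  have hfin := finite_based_simplices hX k n
  obtain ⟨L, hL⟩ := (hfin.image Lf).bddAbove
  obtain ⟨D, hD⟩ := (hfin.image Df).bddAbove
  have key : ∀ σ : Fin (n + 1) → G, (∀ i j, wordDist X (σ i) (σ j) ≤ k) →
      F (single σ 1) = leftTranslate (σ 0) _ (F (single (based σ) 1)) := fun σ hσ => by
    rw [← hF _ _ (single_mem_chainsAt (based_mem hσ).2 1), leftTranslate_single_based]
  refine ⟨L, D, map_mem_of_supported _ _ _ fun σ hσ => ?_, fun r c hc hc' =>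
    map_mem_of_supported F
      ({σ | ∀ i j, wordDist X (σ i) (σ j) ≤ k} ∩ {σ | ∀ i, σ i ∈ superlevel χ r}) _
      (fun σ hσ => ?_) c (fun σ hσ => ⟨hc hσ, hc' hσ⟩)⟩
  · rw [key σ hσ]
    exact leftTranslate_mem_chainsAt _
      (chainsAt_mono X (hL ⟨_, based_mem hσ, rfl⟩) _ (hLf (based σ)))
  · rw [key σ hσ.1]
    refine chainsOn_mono (superlevel_anti χ ?_) _
      (leftTranslate_mem_chainsOn hχ (σ 0) (hDf (based σ)))
    have h1 : Df (based σ) ≤ D := hD ⟨_, based_mem hσ.1, rfl⟩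
    have h2 : r ≤ χ (σ 0) := hσ.2 0
    linarith

/-- An equivariant map raising the valuation of each simplex raises valuations uniformly. -/
lemma exists_gain {X : Finset G} (hX : Subgroup.closure (X : Set G) = ⊤) {χ : G → ℝ}
    (hχ : IsCharacter χ) {n q k : ℕ} (F : Chain G (n + 1) →ₗ[ℤ] Chain G q)
    (hF : ∀ (g : G), ∀ c ∈ chainsAt X k (n + 1),
      F (leftTranslate g _ c) = leftTranslate g _ (F c))
    (hgain : ∀ σ : Fin (n + 1) → G, (∀ i j, wordDist X (σ i) (σ j) ≤ k) → ∃ ε > 0, ∀ r,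
      (∀ i, r ≤ χ (σ i)) → F (single σ 1) ∈ chainsOn (superlevel χ (r + ε)) q) :
    ∃ ε > 0, ∀ r, ∀ c ∈ chainsAt X k (n + 1), c ∈ chainsOn (superlevel χ r) (n + 1) →
        F c ∈ chainsOn (superlevel χ (r + ε)) q := by
  have hfin := finite_based_simplices hX k n
  have hev : ∀ᶠ ε in nhdsWithin (0 : ℝ) (Set.Ioi 0), ∀ σ ∈ {σ : Fin (n + 1) → G | σ 0 = 1 ∧
      ∀ i j, wordDist X (σ i) (σ j) ≤ k}, ∀ r, (∀ i, r ≤ χ (σ i)) →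
        F (single σ 1) ∈ chainsOn (superlevel χ (r + ε)) q := by
    rw [Filter.eventually_all_finite hfin]
    rintro σ ⟨-, hσ⟩
    obtain ⟨ε, hε, h⟩ := hgain σ hσ
    filter_upwards [Ioo_mem_nhdsGT hε] with δ hδ r hr
    exact chainsOn_mono (superlevel_anti χ (by linarith [hδ.2])) _ (h r hr)
  obtain ⟨ε, hε, hpos⟩ := (hev.and self_mem_nhdsWithin).exists
  refine ⟨ε, hpos, fun r c hc hc' => map_mem_of_supported F
      ({σ | ∀ i j, wordDist X (σ i) (σ j) ≤ k} ∩ {σ | ∀ i, σ i ∈ superlevel χ r}) _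
      (fun σ hσ => ?_) c (fun σ hσ => ⟨hc hσ, hc' hσ⟩)⟩
  rw [← leftTranslate_single_based σ, hF _ _ (single_mem_chainsAt (based_mem hσ.1).2 1)]
  refine chainsOn_mono (superlevel_anti χ ?_) _ (leftTranslate_mem_chainsOn hχ (σ 0)
    (hε _ (based_mem hσ.1) (r - χ (σ 0)) fun i => ?_))
  · linarith
  · have h1 : r ≤ χ (σ i) := hσ.2 i
    have h2 := hχ (σ 0) (based σ i)
    have h3 : σ 0 * based σ i = σ i := by simp [based]
    rw [h3] at h2
    linarith

/-- The equivariant endomorphism of the bar complex built from a choice of fillings, starting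
with right multiplication by `t` on vertices. -/
noncomputable def fillingMap (fill : ∀ n, Chain G (n + 1) → Chain G (n + 2)) (t : G) :
    ∀ n, Chain G n →ₗ[ℤ] Chain G n
  | 0 => LinearMap.id
  | 1 => rightTranslate t 1
  | n + 2 => Finsupp.lift _ ℤ _ (fun σ => leftTranslate (σ 0) _
      (fill n (fillingMap fill t (n + 1) (face (n + 1) (single (based σ) 1)))))

lemma fillingMap_single (fill : ∀ n, Chain G (n + 1) → Chain G (n + 2)) (t : G) (n : ℕ)
    (σ : Fin (n + 2) → G) :
    fillingMap fill t (n + 2) (single σ 1) = leftTranslate (σ 0) _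
      (fill n (fillingMap fill t (n + 1) (face (n + 1) (single (based σ) 1)))) := by
  simp [fillingMap]

lemma fillingMap_leftTranslate (fill : ∀ n, Chain G (n + 1) → Chain G (n + 2)) (t : G) (n : ℕ) (g : G)
    (c : Chain G n) :
    fillingMap fill t n (leftTranslate g n c) = leftTranslate g n (fillingMap fill t n c) := by
  match n with
  | 0 => rfl
  | 1 => exact rightTranslate_leftTranslate t g 1 c
  | n + 2 =>
    have : fillingMap fill t (n + 2) ∘ₗ leftTranslate g _ =
        leftTranslate g _ ∘ₗ fillingMap fill t (n + 2) := by
      ext σ : 2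
      simp only [LinearMap.comp_apply, Finsupp.lsingle_apply]
      rw [leftTranslate_single, fillingMap_single, fillingMap_single, based_mul,
        leftTranslate_leftTranslate]
    exact LinearMap.congr_fun this c

/-- If cycles can be filled without loss of valuation at the scales `kv`, then there is an
equivariant chain map of the bar complex into these scales raising valuations by `χ t`. -/
lemma exists_chain_map {X : Finset G} {χ : G → ℝ} (hχ : IsCharacter χ) {kv : ℕ → ℕ} {N : ℕ}
    (hfill : ∀ n < N, ∀ z ∈ chainsAt X (kv n) (n + 1), face n z = 0 →
      ∃ c ∈ chainsAt X (kv (n + 1)) (n + 2), face (n + 1) c = z ∧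
        ∀ r, z ∈ chainsOn (superlevel χ r) (n + 1) → c ∈ chainsOn (superlevel χ r) (n + 2))
    (t : G) :
    ∃ F : ∀ n, Chain G n →ₗ[ℤ] Chain G n, F 0 = LinearMap.id ∧
      (∀ n (g : G) c, F n (leftTranslate g n c) = leftTranslate g n (F n c)) ∧
      (∀ n ≤ N, ∀ c, face n (F (n + 1) c) = F n (face n c)) ∧
      (∀ n ≤ N, ∀ c, F (n + 1) c ∈ chainsAt X (kv n) (n + 1)) ∧
      (∀ n ≤ N, ∀ r, ∀ c ∈ chainsOn (superlevel χ r) (n + 1),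
        F (n + 1) c ∈ chainsOn (superlevel χ (r + χ t)) (n + 1)) := by
  have : ∀ n (z : Chain G (n + 1)), ∃ c : Chain G (n + 2), n < N →
      z ∈ chainsAt X (kv n) (n + 1) → face n z = 0 →
      c ∈ chainsAt X (kv (n + 1)) (n + 2) ∧ face (n + 1) c = z ∧
        ∀ r, z ∈ chainsOn (superlevel χ r) (n + 1) →
          c ∈ chainsOn (superlevel χ r) (n + 2) := by
    intro n z
    by_cases h : n < N ∧ z ∈ chainsAt X (kv n) (n + 1) ∧ face n z = 0
    · obtain ⟨c, hc⟩ := hfill n h.1 z h.2.1 h.2.2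
      exact ⟨c, fun _ _ _ => hc⟩
    · exact ⟨0, fun h1 h2 h3 => absurd ⟨h1, h2, h3⟩ h⟩
  choose fl hfl using this
  have htr := fillingMap_leftTranslate fl t
  have main : ∀ n ≤ N, (∀ c, face n (fillingMap fl t (n + 1) c) = fillingMap fl t n (face n c)) ∧
      (∀ c, fillingMap fl t (n + 1) c ∈ chainsAt X (kv n) (n + 1)) ∧
      (∀ r, ∀ c ∈ chainsOn (superlevel χ r) (n + 1),
        fillingMap fl t (n + 1) c ∈ chainsOn (superlevel χ (r + χ t)) (n + 1)) := by
    intro n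
    induction n with
    | zero =>
      intro _
      refine ⟨fun c => ?_, fun c _ _ i j => ?_, fun r c hc => rightTranslate_mem_chainsOn hχ t hc⟩
      · change face 0 (rightTranslate t 1 c) = face 0 c
        rw [face_rightTranslate, rightTranslate_zero, LinearMap.id_apply]
      · rw [Subsingleton.elim (α := Fin 1) i j, wordDist_self]
        exact Nat.zero_le _
    | succ n ih =>
      intro hn
      obtain ⟨ih1, ih2, ih3⟩ := ih (by lia)
      have hcyc : ∀ c : Chain G (n + 2),
          face n (fillingMap fl t (n + 1) (face (n + 1) c)) = 0 := fun c => by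
        rw [ih1, face_face, map_zero]
      have hkey : ∀ c, _ := fun c => hfl n _ (by lia) (ih2 (face (n + 1) c)) (hcyc c)
      refine ⟨fun c => ?_, fun c => ?_, fun r c hc => ?_⟩
      · refine map_eq_of_supported (face (n + 1) ∘ₗ fillingMap fl t (n + 2))
          (fillingMap fl t (n + 1) ∘ₗ face (n + 1)) Set.univ (fun σ _ => ?_) c (by simp)
        simp only [LinearMap.comp_apply]
        rw [fillingMap_single, face_leftTranslate, (hkey _).2.1, ← htr, ← face_leftTranslate,
          leftTranslate_single_based]
      · refine map_mem_of_supported (fillingMap fl t (n + 2)) Set.univ _ (fun σ _ => ?_) c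
          (by simp)
        rw [fillingMap_single]
        exact leftTranslate_mem_chainsAt _ (hkey _).1
      · refine map_mem_of_supported (fillingMap fl t (n + 2)) _ _ (fun σ hσ => ?_) c hc
        rw [fillingMap_single]
        have hb : single (based σ) 1 ∈ chainsOn (superlevel χ (r - χ (σ 0))) (n + 2) := by
          refine single_mem_chainsOn (fun i => ?_) _
          have h1 : r ≤ χ (σ i) := hσ i
          have h2 := hχ (σ 0) (based σ i)
          have h3 : σ 0 * based σ i = σ i := by simp [based]
          rw [h3] at h2
          change r - χ (σ 0) ≤ χ (based σ i)
          linarith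
        refine chainsOn_mono (superlevel_anti χ (le_of_eq ?_)) _
          (leftTranslate_mem_chainsOn hχ (σ 0) ((hkey _).2.2 _ (ih3 _ _ (face_mem_chainsOn hb))))
        ring
  exact ⟨fillingMap fl t, rfl, htr, fun n hn => (main n hn).1, fun n hn => (main n hn).2.1,
    fun n hn => (main n hn).2.2⟩

lemma vrChain_iff {X : Finset G} {S : Set G} {q k : ℕ} {c : Chain G (q + 1)} :
    VRChain X S q k c ↔ c ∈ chainsOn S (q + 1) ∧ c ∈ chainsAt X k (q + 1) :=
  ⟨fun h => ⟨fun σ hσ => (h σ hσ).1, fun σ hσ => (h σ hσ).2⟩,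
    fun h _ hσ => ⟨h.1 hσ, h.2 hσ⟩⟩

lemma vrChain_univ_iff {X : Finset G} {q k : ℕ} {c : Chain G (q + 1)} :
    VRChain X Set.univ q k c ↔ c ∈ chainsAt X k (q + 1) :=
  vrChain_iff.trans (and_iff_right fun _ _ _ => trivial)

lemma face_zero_apply (c : Chain G 1) (σ : Fin 0 → G) : face 0 c σ = aug c := by
  have : Finsupp.lapply σ ∘ₗ face 0 = (aug : Chain G 1 →ₗ[ℤ] ℤ) := by
    ext τ
    simp [face_single, aug, Subsingleton.elim _ σ]
  exact LinearMap.congr_fun this c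

lemma face_zero_eq_zero_iff (c : Chain G 1) : face 0 c = 0 ↔ aug c = 0 := by
  constructor
  · intro h
    rw [← face_zero_apply c Fin.elim0, h]
    rfl
  · intro h
    refine Finsupp.ext fun σ => ?_
    rw [face_zero_apply, h]
    rfl

lemma boundsAt_iff {X : Finset G} {S : Set G} {q k l : ℕ} :
    BoundsAt X S q k l ↔ ∀ z ∈ chainsAt X k (q + 1), z ∈ chainsOn S (q + 1) → face q z = 0 →
      ∃ c ∈ chainsAt X l (q + 2), c ∈ chainsOn S (q + 2) ∧ face (q + 1) c = z := by
  cases q with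
  | zero =>
    simp only [BoundsAt, vrChain_iff, face_zero_eq_zero_iff]
    refine forall_congr' fun z => ?_
    constructor
    · intro h h1 h2 h3
      obtain ⟨c, ⟨h4, h5⟩, h6⟩ := h ⟨h2, h1⟩ h3
      exact ⟨c, h5, h4, h6⟩
    · rintro h ⟨h1, h2⟩ h3
      obtain ⟨c, h4, h5, h6⟩ := h h2 h1 h3
      exact ⟨c, ⟨h5, h4⟩, h6⟩
  | succ q =>
    simp only [BoundsAt, vrChain_iff]
    refine forall_congr' fun z => ?_
    constructor
    · intro h h1 h2 h3
      obtain ⟨c, ⟨h4, h5⟩, h6⟩ := h ⟨h2, h1⟩ h3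
      exact ⟨c, h5, h4, h6⟩
    · rintro h ⟨h1, h2⟩ h3
      obtain ⟨c, h4, h5, h6⟩ := h h2 h1 h3
      exact ⟨c, ⟨h5, h4⟩, h6⟩

lemma le_vchain_iff {χ : G → ℝ} {q : ℕ} {c : Chain G (q + 1)} {r : ℝ} :
    (r : EReal) ≤ vchain χ c ↔ c ∈ chainsOn (superlevel χ r) (q + 1) := by
  simp only [vchain, vsimp, le_iInf_iff, EReal.coe_le_coe_iff]
  rfl

/-- A nonzero chain has a vertex of minimal character value. -/
lemma exists_min_vertex (χ : G → ℝ) {q : ℕ} {c : Chain G (q + 1)} (hc : c ≠ 0) :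
    ∃ s, c ∈ chainsOn (superlevel χ (χ s)) (q + 1) ∧
      ∀ r, c ∈ chainsOn (superlevel χ r) (q + 1) → r ≤ χ s := by
  obtain ⟨σ₀, hσ₀⟩ := Finsupp.support_nonempty_iff.2 hc
  obtain ⟨⟨σ, i⟩, hp, hmin⟩ := Finset.exists_min_image (c.support ×ˢ Finset.univ)
    (fun p : (Fin (q + 1) → G) × Fin (q + 1) => χ (p.1 p.2)) ⟨(σ₀, 0), by simpa using hσ₀⟩
  have hσ : σ ∈ c.support := (Finset.mem_product.1 hp).1
  exact ⟨σ i, fun τ hτ j => hmin (τ, j) (Finset.mem_product.2 ⟨hτ, Finset.mem_univ _⟩),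
    fun r hr => hr hσ i⟩

lemma vchain_eq {χ : G → ℝ} {q : ℕ} {c : Chain G (q + 1)} {v : ℝ}
    (hv : c ∈ chainsOn (superlevel χ v) (q + 1))
    (hmax : ∀ r, c ∈ chainsOn (superlevel χ r) (q + 1) → r ≤ v) : vchain χ c = v := by
  refine le_antisymm (le_of_not_gt fun h => ?_) (le_vchain_iff.2 hv)
  obtain ⟨r, h1, h2⟩ := EReal.lt_iff_exists_real_btwn.1 h
  exact absurd (hmax r (le_vchain_iff.1 h2.le)) (not_le.2 (EReal.coe_lt_coe_iff.1 h1))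

/-- Fillings in the nonnegative half translate to fillings that do not lose valuation. -/
lemma exists_fill_of_boundsAt {X : Finset G} {χ : G → ℝ} (hχ : IsCharacter χ) {q k l : ℕ}
    (h : BoundsAt X (superlevel χ 0) q k l) :
    ∀ z ∈ chainsAt X k (q + 1), face q z = 0 →
      ∃ c ∈ chainsAt X l (q + 2), face (q + 1) c = z ∧
        ∀ r, z ∈ chainsOn (superlevel χ r) (q + 1) → c ∈ chainsOn (superlevel χ r) (q + 2) := by
  intro z hz hz0
  by_cases hne : z = 0
  · exact ⟨0, zero_mem _, by rw [map_zero, hne], fun r _ => zero_mem _⟩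
  obtain ⟨s, h1, h2⟩ := exists_min_vertex χ hne
  have hs : χ s⁻¹ + χ s = 0 := by
    have h3 := hχ s⁻¹ s
    have h4 := hχ 1 1
    rw [inv_mul_cancel] at h3
    rw [one_mul] at h4
    linarith
  obtain ⟨c, hc, hc', hcz⟩ := boundsAt_iff.1 h (leftTranslate s⁻¹ _ z)
    (leftTranslate_mem_chainsAt _ hz) (hs ▸ leftTranslate_mem_chainsOn hχ s⁻¹ h1)
    (by rw [face_leftTranslate, hz0, map_zero])
  refine ⟨leftTranslate s _ c, leftTranslate_mem_chainsAt _ hc, ?_, fun r hr =>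
    chainsOn_mono (superlevel_anti χ ?_) _ (leftTranslate_mem_chainsOn hχ s hc')⟩
  · rw [face_leftTranslate, hcz, leftTranslate_leftTranslate, mul_inv_cancel, leftTranslate_one]
  · simpa using h2 r hr

/-- The equivariant retraction of the bar complex onto the scales of a connecting vector. -/
lemma exists_retraction {X : Finset G} {m : ℕ} {kv : ℕ → ℕ}
    (hconn : ∀ q < m, BoundsAt X Set.univ q (kv q) (kv (q + 1))) :
    ∃ F : ∀ n, Chain G n →ₗ[ℤ] Chain G n, F 0 = LinearMap.id ∧
      (∀ n (g : G) c, F n (leftTranslate g n c) = leftTranslate g n (F n c)) ∧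
      (∀ n ≤ m, ∀ c, face n (F (n + 1) c) = F n (face n c)) ∧
      (∀ n ≤ m, ∀ c, F (n + 1) c ∈ chainsAt X (kv n) (n + 1)) := by
  have h0 : IsCharacter (fun _ : G => (0 : ℝ)) := fun _ _ => by simp
  have hS : superlevel (fun _ : G => (0 : ℝ)) 0 = Set.univ :=
    Set.eq_univ_of_forall fun _ => le_refl (0 : ℝ)
  obtain ⟨F, h1, h2, h3, h4, -⟩ := exists_chain_map h0
    (fun q hq => exists_fill_of_boundsAt h0 (hS ▸ hconn q hq)) (1 : G)
  exact ⟨F, h1, h2, h3, h4⟩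

/-- The type `FP` property of the nonnegative half yields a valuation-raising endomorphism. -/
lemma exists_raising_of_typeFP {X : Finset G} (hX : Subgroup.closure (X : Set G) = ⊤) {m : ℕ}
    {kv : ℕ → ℕ} (hconn : ∀ q < m, BoundsAt X Set.univ q (kv q) (kv (q + 1)))
    {χ : G → ℝ} (hχ : IsCharacter χ) (hne : ∃ g, χ g ≠ 0)
    (hfp : TypeFP X (superlevel χ 0) m) :
    ∃ φ : ∀ q : ℕ, Chain G (q + 1) →ₗ[ℤ] Chain G (q + 1),
      IsChainEndo X ((Finset.range (m + 1)).sup kv) m φ ∧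
      ∀ q ≤ m, ∀ c : Chain G (q + 1),
        VRChain X Set.univ q ((Finset.range (m + 1)).sup kv) c → c ≠ 0 →
          0 < vchain χ (φ q c) - vchain χ c := by
  have hnext : ∀ q k, ∃ l, q < m → BoundsAt X (superlevel χ 0) q k l := by
    intro q k
    by_cases hq : q < m
    · obtain ⟨l, -, hl⟩ := hfp q hq k
      exact ⟨l, fun _ => hl⟩
    · exact ⟨0, fun h => absurd h hq⟩
  choose next hnext using hnext
  let lv : ℕ → ℕ := Nat.rec 0 next
  have hlv : ∀ q < m, BoundsAt X (superlevel χ 0) q (lv q) (lv (q + 1)) :=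
    fun q hq => hnext q (lv q) hq
  obtain ⟨α, hα0, hαg, hαd, hαk⟩ := exists_retraction hconn
  choose L D hL hD using fun q => exists_bound hX hχ (k := lv q) (α (q + 1))
    (fun g c _ => hαg (q + 1) g c)
  obtain ⟨Dmax, hDmax⟩ := (((Set.finite_Iic m).image D)).bddAbove
  obtain ⟨t, ht⟩ := exists_le_character hχ hne (Dmax + 1)
  obtain ⟨ψ, hψ0, hψg, hψd, hψk, hψχ⟩ := exists_chain_map hχ
    (fun q hq => exists_fill_of_boundsAt hχ (hlv q hq)) t
  refine ⟨fun q => α (q + 1) ∘ₗ ψ (q + 1), ⟨fun q hq c _ => ?_, fun q _ g c _ => ?_,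
    fun c _ => ?_, fun q hq c _ => ?_⟩, fun q hq c _ hc => ?_⟩
  · exact vrChain_univ_iff.2 (chainsAt_mono X
      (Finset.le_sup (Finset.mem_range.2 (by lia))) _ (hαk q hq _))
  · change α (q + 1) (ψ (q + 1) (leftTranslate g (q + 1) c)) = leftTranslate g (q + 1) _
    rw [hψg, hαg]
    rfl
  · change aug (α 1 (ψ 1 c)) = aug c
    rw [← face_zero_apply _ Fin.elim0, hαd 0 (by lia), hψd 0 (by lia), hα0, hψ0]
    exact face_zero_apply c Fin.elim0
  · change face (q + 1) (α (q + 2) (ψ (q + 2) c)) = α (q + 1) (ψ (q + 1) (face (q + 1) c))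
    rw [hαd _ hq, hψd _ hq]
  · rw [EReal.sub_pos]
    obtain ⟨s, h1, h2⟩ := exists_min_vertex χ hc
    rw [vchain_eq h1 h2]
    refine lt_of_lt_of_le ?_ (le_vchain_iff.2 (hD q _ _ (hψk q hq c) (hψχ q hq _ c h1)))
    rw [EReal.coe_lt_coe_iff]
    have : D q ≤ Dmax := hDmax ⟨q, hq, rfl⟩
    linarith

/-- A valuation-raising endomorphism fills cycles of scale `k` with a uniform loss of valuation. -/
lemma exists_fill_of_raising {X : Finset G} (hX : Subgroup.closure (X : Set G) = ⊤)
    {χ : G → ℝ} (hχ : IsCharacter χ) {k q : ℕ} {φ : ∀ n, Chain G n →ₗ[ℤ] Chain G n}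
    (hφ0 : φ 0 = LinearMap.id)
    (hφk : ∀ n ≤ q + 1, ∀ c ∈ chainsAt X k (n + 1), φ (n + 1) c ∈ chainsAt X k (n + 1))
    (hφg : ∀ n ≤ q + 1, ∀ (g : G), ∀ c ∈ chainsAt X k (n + 1),
      φ (n + 1) (leftTranslate g _ c) = leftTranslate g _ (φ (n + 1) c))
    (hφd : ∀ n ≤ q + 1, ∀ c ∈ chainsAt X k (n + 1),
      face n (φ (n + 1) c) = φ n (face n c))
    (hφχ : ∀ n ≤ q + 1, ∃ ε > 0, ∀ r, ∀ c ∈ chainsAt X k (n + 1),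
      c ∈ chainsOn (superlevel χ r) (n + 1) →
        φ (n + 1) c ∈ chainsOn (superlevel χ (r + ε)) (n + 1)) :
    ∃ (L : ℕ) (D : ℝ), ∀ r, ∀ c ∈ chainsAt X k (q + 2),
      face (q + 1) c ∈ chainsOn (superlevel χ r) (q + 1) →
        ∃ c' ∈ chainsAt X L (q + 2), c' ∈ chainsOn (superlevel χ (r - D)) (q + 2) ∧
          face (q + 1) c' = face (q + 1) c := by
  let H := coneHomotopy (fun n => LinearMap.id) φ
  have hH := face_coneHomotopy (X := X) (k := k) (N := q + 1) (f := fun n => LinearMap.id)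
    (f' := φ) hφ0.symm (fun _ _ _ _ => rfl) hφd
  obtain ⟨L, D, hL, hD⟩ := exists_bound hX hχ (k := k) (H (q + 1)) (fun g c hc =>
    coneHomotopy_leftTranslate (N := q + 1) (fun _ _ _ _ _ => rfl) hφg (q + 1) (by lia) g c hc)
  obtain ⟨ε, hε, hgain⟩ := hφχ (q + 1) le_rfl
  obtain ⟨ε', hε', hgain'⟩ := hφχ q (by lia)
  refine ⟨max L k, D, fun r c hc hcr => ?_⟩
  obtain ⟨M, hM⟩ := exists_mem_chainsOn χ c
  have iter : ∀ N : ℕ, ∃ w ∈ chainsAt X L (q + 2), ∃ c' ∈ chainsAt X k (q + 2),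
      w ∈ chainsOn (superlevel χ (r - D)) (q + 2) ∧
      c' ∈ chainsOn (superlevel χ (-M + N * ε)) (q + 2) ∧
      face (q + 1) c' ∈ chainsOn (superlevel χ r) (q + 1) ∧
      face (q + 1) (w + c') = face (q + 1) c := by
    intro N
    induction N with
    | zero => exact ⟨0, zero_mem _, c, hc, zero_mem _, by simpa using hM, hcr, by simp⟩
    | succ N ih =>
      obtain ⟨w, hw, c', hc', hwr, hcr', hfr, heq⟩ := ih
      have hf := face_mem_chainsAt hc'
      refine ⟨w + H (q + 1) (face (q + 1) c'), add_mem hw (hL _ hf), φ (q + 2) c',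
        hφk _ le_rfl _ hc', add_mem hwr (hD _ _ hf hfr), ?_, ?_, ?_⟩
      · have := hgain _ _ hc' hcr'
        convert this using 2
        push_cast
        ring_nf
      · rw [hφd _ le_rfl _ hc']
        exact chainsOn_mono (superlevel_anti χ (by linarith)) _ (hgain' _ _ hf hfr)
      · rw [← heq, map_add, map_add, map_add, hφd _ le_rfl _ hc', hH q (by lia) _ hf, face_face]
        simp [add_assoc]
  obtain ⟨N, hN⟩ := exists_nat_ge ((r - D + M) / ε)
  obtain ⟨w, hw, c', hc', hwr, hcr', -, heq⟩ := iter N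
  refine ⟨w + c', add_mem (chainsAt_mono X (le_max_left _ _) _ hw)
    (chainsAt_mono X (le_max_right _ _) _ hc'), add_mem hwr
    (chainsOn_mono (superlevel_anti χ ?_) _ hcr'), heq⟩
  have := (div_le_iff₀ hε).1 hN
  linarith

/-- If cycles in the nonnegative half can be filled with a uniform loss of valuation, then they
can be filled in the nonnegative half. -/
lemma exists_boundsAt_of_fill {X : Finset G} (hX : Subgroup.closure (X : Set G) = ⊤)
    {χ : G → ℝ} (hχ : IsCharacter χ) (hne : ∃ g, χ g ≠ 0) {k q L : ℕ} {D : ℝ}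
    (hfill : ∀ z ∈ chainsAt X k (q + 1), z ∈ chainsOn (superlevel χ 0) (q + 1) →
      face q z = 0 → ∃ c ∈ chainsAt X L (q + 2), c ∈ chainsOn (superlevel χ (-D)) (q + 2) ∧
        face (q + 1) c = z) :
    ∃ l ≥ k, BoundsAt X (superlevel χ 0) q k l := by
  obtain ⟨t, ht⟩ := exists_le_character hχ hne (max D 0)
  let P := coneHomotopy (fun n => LinearMap.id) (rightTranslate t)
  have hP := face_coneHomotopy (X := X) (k := k) (N := q) (f := fun n => LinearMap.id)
    (f' := rightTranslate t) (rightTranslate_zero t).symm (fun _ _ _ _ => rfl)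
    (fun n _ c _ => face_rightTranslate t n c)
  obtain ⟨L₁, -, hL₁, -⟩ := exists_bound hX hχ (k := k) (P (q + 1)) (fun g c hc =>
    coneHomotopy_leftTranslate (N := q) (fun _ _ _ _ _ => rfl)
      (fun n _ g c _ => rightTranslate_leftTranslate t g _ c) (q + 1) (by lia) g c hc)
  obtain ⟨L₂, -, hL₂, -⟩ := exists_bound hX hχ (k := L) (rightTranslate t (q + 2))
    (fun g c _ => rightTranslate_leftTranslate t g _ c)
  refine ⟨max k (max L₁ L₂), le_max_left _ _, boundsAt_iff.2 fun z hz hz0 hzd => ?_⟩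
  obtain ⟨c, hc, hcD, hcz⟩ := hfill z hz hz0 hzd
  refine ⟨P (q + 1) z + rightTranslate t _ c,
    add_mem (chainsAt_mono X (by simp) _ (hL₁ z hz)) (chainsAt_mono X (by simp) _ (hL₂ c hc)),
    add_mem (coneHomotopy_mem_chainsOn (fun _ _ h => h) (fun n c h => ?_) _ z hz0)
      (chainsOn_mono (superlevel_anti χ ?_) _ (rightTranslate_mem_chainsOn hχ t hcD)), ?_⟩
  · exact chainsOn_mono (superlevel_anti χ (by linarith [le_max_right D 0])) _
      (rightTranslate_mem_chainsOn hχ t h)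
  · linarith [le_max_left D 0]
  · rw [map_add, hP q le_rfl z hz, face_rightTranslate, hcz, hzd]
    simp

/-- A valuation-raising endomorphism forces the nonnegative half to have type `FP`. -/
lemma typeFP_of_raising {X : Finset G} (hX : Subgroup.closure (X : Set G) = ⊤) {m : ℕ}
    {kv : ℕ → ℕ} (hconn : ∀ q < m, BoundsAt X Set.univ q (kv q) (kv (q + 1)))
    {χ : G → ℝ} (hχ : IsCharacter χ) (hne : ∃ g, χ g ≠ 0)
    {φ : ∀ q : ℕ, Chain G (q + 1) →ₗ[ℤ] Chain G (q + 1)}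
    (hφ : IsChainEndo X ((Finset.range (m + 1)).sup kv) m φ)
    (hraise : ∀ q ≤ m, ∀ c : Chain G (q + 1),
      VRChain X Set.univ q ((Finset.range (m + 1)).sup kv) c → c ≠ 0 →
        0 < vchain χ (φ q c) - vchain χ c) :
    TypeFP X (superlevel χ 0) m := by
  intro q hq K
  set k := (Finset.range (m + 1)).sup kv with hk
  have hkv : ∀ n ≤ m, kv n ≤ k := fun n hn => Finset.le_sup (Finset.mem_range.2 (by lia))
  obtain ⟨hφk, hφg, hφa, hφd⟩ := hφ
  let φ' : ∀ n, Chain G n →ₗ[ℤ] Chain G n := fun n => match n with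
    | 0 => LinearMap.id
    | n + 1 => φ n
  obtain ⟨L₂, D₂, hfill⟩ := exists_fill_of_raising (q := q) (k := k) hX hχ (φ := φ') rfl
    (fun n hn c hc => vrChain_univ_iff.1 (hφk n (by lia) c (vrChain_univ_iff.2 hc)))
    (fun n hn g c hc => hφg n (by lia) g c (vrChain_univ_iff.2 hc))
    (fun n hn c hc => by
      match n with
      | 0 =>
        refine Finsupp.ext fun σ => ?_
        exact (face_zero_apply _ σ).trans
          ((hφa c (vrChain_univ_iff.2 hc)).trans (face_zero_apply c σ).symm)
      | n + 1 => exact hφd n (by lia) c (vrChain_univ_iff.2 hc))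
    (fun n hn => exists_gain hX hχ (φ n)
      (fun g c hc => hφg n (by lia) g c (vrChain_univ_iff.2 hc)) fun σ hσ => by
        have hne : single σ (1 : ℤ) ≠ 0 := by simp
        obtain ⟨s, h1, h2⟩ := exists_min_vertex χ hne
        have hlt := hraise n (by lia) (single σ 1)
          (vrChain_univ_iff.2 (single_mem_chainsAt hσ 1)) hne
        rw [EReal.sub_pos, vchain_eq h1 h2] at hlt
        obtain ⟨v, hv1, hv2⟩ := EReal.lt_iff_exists_real_btwn.1 hlt
        refine ⟨v - χ s, _root_.sub_pos.2 (EReal.coe_lt_coe_iff.1 hv1), fun r hr =>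
          chainsOn_mono (superlevel_anti χ ?_) _ (le_vchain_iff.1 hv2.le)⟩
        have := h2 r (single_mem_chainsOn (S := superlevel χ r) hr 1)
        linarith)
  obtain ⟨α, hα0, hαg, hαd, hαk⟩ := exists_retraction hconn
  obtain ⟨-, Dα, -, hDα⟩ := exists_bound hX hχ (k := K) (α (q + 1)) (fun g c _ => hαg _ g c)
  let H := coneHomotopy (fun n => LinearMap.id) α
  have hH := face_coneHomotopy (X := X) (k := K) (N := m) (f := fun n => LinearMap.id)
    (f' := α) hα0.symm (fun _ _ _ _ => rfl) (fun n hn c _ => hαd n hn c)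
  obtain ⟨L₁, D₁, hL₁, hD₁⟩ := exists_bound hX hχ (k := K) (H (q + 1)) (fun g c hc =>
    coneHomotopy_leftTranslate (N := m) (fun _ _ _ _ _ => rfl)
      (fun n _ g c _ => hαg _ g c) (q + 1) (by lia) g c hc)
  refine exists_boundsAt_of_fill hX hχ hne (L := max L₁ L₂) (D := max D₁ (Dα + D₂))
    fun z hz hz0 hzd => ?_
  obtain ⟨c, hc, -, hcz⟩ := boundsAt_iff.1 (hconn q hq) (α (q + 1) z) (hαk q hq.le z)
    (fun _ _ _ => trivial) (by rw [hαd q hq.le, hzd, map_zero])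
  obtain ⟨c', hc', hcD', hcz'⟩ := hfill (0 - Dα) c (chainsAt_mono X (hkv _ hq) _ hc)
    (hcz ▸ hDα 0 z hz hz0)
  refine ⟨H (q + 1) z + c', add_mem (chainsAt_mono X (le_max_left _ _) _ (hL₁ z hz))
    (chainsAt_mono X (le_max_right _ _) _ hc'), add_mem
    (chainsOn_mono (superlevel_anti χ ?_) _ (hD₁ 0 z hz hz0))
    (chainsOn_mono (superlevel_anti χ ?_) _ hcD'), ?_⟩
  · linarith [le_max_left D₁ (Dα + D₂)]
  · linarith [le_max_right D₁ (Dα + D₂)]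
  · rw [map_add, hcz', hcz, hH q hq.le z hz, hzd]
    simp

/-- Given a homological connecting vector `(k₀,…,k_m)` for `G` with maximum `k`, a nonzero
character `χ` lies in `Σ^m(G;ℤ)` iff there is a valuation-raising chain endomorphism of
`ℤG`-complexes on `(C_q^k(G))_{q≤m}` extending the identity on `ℤ`. -/
theorem stmt12 {G : Type*} [Group G] (X : Finset G)
    (hX : Subgroup.closure (X : Set G) = ⊤) (m : ℕ) (kv : ℕ → ℕ)
    (hconn : ∀ q < m, BoundsAt X Set.univ q (kv q) (kv (q + 1)))
    (χ : G → ℝ) (hχ : IsCharacter χ) (hne : ∃ g, χ g ≠ 0) :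
    TypeFP X {g : G | 0 ≤ χ g} m ↔
      ∃ φ : ∀ q : ℕ, ((Fin (q + 1) → G) →₀ ℤ) →ₗ[ℤ] ((Fin (q + 1) → G) →₀ ℤ),
        IsChainEndo X ((Finset.range (m + 1)).sup kv) m φ ∧
        ∀ q ≤ m, ∀ c : (Fin (q + 1) → G) →₀ ℤ,
          VRChain X Set.univ q ((Finset.range (m + 1)).sup kv) c → c ≠ 0 →
            0 < vchain χ (φ q c) - vchain χ c := by
  exact ⟨exists_raising_of_typeFP hX hconn hχ hne,
    fun ⟨_, hφ, hraise⟩ => typeFP_of_raising hX hconn hχ hne hφ hraise⟩
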